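/- arXiv:2309.05168 — 2 statements merged into one kernel-verified Lean document; each statement's English description precedes it below -/
import Mathlib

section
/- Assume in addition that X is a metric space. Let A ⊂ X be compact and σ-invariant with σx ≠ x for every x ∈ A. Then γ(A) < ∞, and there exists an open σ-invariant set U ⊂ X with A ⊂ U such that γ(cl U) = γ(A). -/
noncomputable section

open Real

/-- The `ℤ_p` index `γ(A)` of a (closed, `σ`-invariant) subset `A ⊆ X`: the least `m`
such that there is a continuous map `h : A → ℂ^m \ {0}` with `h (σ x) = e^{2πi/p} h x`,
and `∞` if no such `m` exists. -/
def gammaIdx {X : Type*} [TopologicalSpace X] (p : ℕ) (σ : X → X) (A : Set X) : ℕ∞ :=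
  sInf ((fun m : ℕ => (m : ℕ∞)) '' {m : ℕ | ∃ h : X → Fin m → ℂ,
    ContinuousOn h A ∧ (∀ x ∈ A, h x ≠ 0) ∧
    (∀ x ∈ A, h (σ x) = Complex.exp (2 * π * Complex.I / p) • h x)})

def avgZ {X E : Type*} [AddCommGroup E] [Module ℂ E] (p : ℕ) (σ : X → X) (z : ℂ) (g : X → E) (x : X) : E :=
  ∑ k ∈ Finset.range p, (z ^ k)⁻¹ • g (σ^[k] x)

theorem avgZ_equiv {X E : Type*} [AddCommGroup E] [Module ℂ E] (p : ℕ) (σ : X → X)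
    (hσp : σ^[p] = id) (z : ℂ) (hz0 : z ≠ 0) (hz : z ^ p = 1) (g : X → E) (x : X) :
    avgZ p σ z g (σ x) = z • avgZ p σ z g x := by
  unfold avgZ
  have h1 := Finset.sum_range_succ (fun k => (z ^ k)⁻¹ • g (σ^[k] x)) p
  have h2 := Finset.sum_range_succ' (fun k => (z ^ k)⁻¹ • g (σ^[k] x)) p
  simp only [hσp, hz, pow_zero, Function.iterate_zero] at h1 h2
  rw [h1] at h2
  rw [add_right_cancel h2, Finset.smul_sum]
  refine Finset.sum_congr rfl fun k _ => ?_
  rw [smul_smul, Function.iterate_succ_apply]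
  congr 1
  rw [pow_succ]
  field_simp

theorem avgZ_cont {X E : Type*} [TopologicalSpace X] [NormedAddCommGroup E] [NormedSpace ℂ E]
    (p : ℕ) (σ : X → X) (hσc : Continuous σ) (z : ℂ) (g : X → E) (hg : Continuous g) :
    Continuous (avgZ p σ z g) := by
  unfold avgZ
  refine continuous_finsetSum _ fun k _ => ?_
  exact (hg.comp (hσc.iterate k)).const_smul _

theorem exists_avg_ne {X : Type*} [MetricSpace X] (p : ℕ) (hp : p.Prime)
    (σ : X → X) (hσc : Continuous σ) (hσp : σ^[p] = id) (z : ℂ) (a : X) (ha : σ a ≠ a) :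
    ∃ g : X → ℂ, Continuous g ∧ avgZ p σ z g a ≠ 0 := by
  refine ⟨fun x => ∏ k ∈ Finset.Ico 1 p, ((dist x (σ^[k] a) : ℝ) : ℂ), by fun_prop, ?_⟩
  unfold avgZ
  rw [Finset.sum_eq_single 0]
  · simp only [pow_zero, inv_one, one_smul, Function.iterate_zero, id]
    rw [Finset.prod_ne_zero_iff]
    intro k hk h0
    rw [Finset.mem_Ico] at hk
    have h1 : Function.IsPeriodicPt σ k a := by
      have : a = σ^[k] a := by simpa using h0
      exact this.symm
    have h2 : Function.IsPeriodicPt σ p a := by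
      show σ^[p] a = a
      rw [hσp]; rfl
    have h3 := h1.gcd h2
    have h4 : Nat.gcd k p = 1 := ((Nat.Prime.coprime_iff_not_dvd hp).2 (Nat.not_dvd_of_pos_of_lt hk.1 hk.2)).symm
    rw [h4] at h3
    exact ha h3
  · intro k hk hk0
    rw [Finset.mem_range] at hk
    have h0 : ∏ j ∈ Finset.Ico 1 p, ((dist (σ^[k] a) (σ^[j] a) : ℝ) : ℂ) = 0 :=
      Finset.prod_eq_zero (i := k) (Finset.mem_Ico.2 ⟨by omega, hk⟩) (by simp)
    show _ • (∏ j ∈ Finset.Ico 1 p, ((dist (σ^[k] a) (σ^[j] a) : ℝ) : ℂ)) = 0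
    rw [h0, smul_zero]
  · intro h
    exact absurd (Finset.mem_range.2 hp.pos) h

/-- Proposition 2.5 (e): a compact invariant set without fixed points
has finite index, and the index is achieved on the closure of an invariant open
neighborhood. -/
theorem gammaIdx_lt_top_and_neighborhood
    {X : Type*} [MetricSpace X] (p : ℕ) (hp : p.Prime)
    (σ : X → X) (hσc : Continuous σ) (hσp : σ^[p] = id)
    (A : Set X) (hAcp : IsCompact A) (hAinv : σ '' A = A)
    (hfix : ∀ x ∈ A, σ x ≠ x) :
    gammaIdx p σ A < ⊤ ∧
    ∃ U : Set X, IsOpen U ∧ A ⊆ U ∧ σ '' U = U ∧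
      gammaIdx p σ (closure U) = gammaIdx p σ A := by
  set z : ℂ := Complex.exp (2 * π * Complex.I / p) with hzdef
  have hz0 : z ≠ 0 := Complex.exp_ne_zero _
  have hz : z ^ p = 1 := (Complex.isPrimitiveRoot_exp p hp.ne_zero).pow_eq_one
  have hzn : ‖z‖ = 1 := Complex.norm_eq_one_of_pow_eq_one hz hp.ne_zero
  have hA : ∀ x ∈ A, σ x ∈ A := fun x hx => hAinv ▸ Set.mem_image_of_mem σ hx
  have hlt : gammaIdx p σ A < ⊤ := by
    choose! g hgc hga using fun a (ha : a ∈ A) =>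
      exists_avg_ne p hp σ hσc hσp z a (hfix a ha)
    obtain ⟨t, htA, ht⟩ := hAcp.elim_nhds_subcover
      (fun a => {x | avgZ p σ z (g a) x ≠ 0}) (fun a ha =>
        (isOpen_ne_fun (avgZ_cont p σ hσc z (g a) (hgc a ha)) continuous_const).mem_nhds (hga a ha))
    refine lt_of_le_of_lt (sInf_le ⟨t.card, ⟨fun x i =>
      avgZ p σ z (g (t.equivFin.symm i)) x, ?_, ?_, ?_⟩, rfl⟩) (ENat.natCast_lt_top t.card)
    · refine (continuous_pi fun i => ?_).continuousOn
      exact avgZ_cont p σ hσc z _ (hgc _ (htA _ (t.equivFin.symm i).2))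
    · intro x hx h0
      have := ht hx
      simp only [Set.mem_iUnion] at this
      obtain ⟨a, hat, hax⟩ := this
      have h1 := congrFun h0 (t.equivFin ⟨a, hat⟩)
      simp only [Equiv.symm_apply_apply] at h1
      exact hax h1
    · intro x hx
      funext i
      exact avgZ_equiv p σ hσp z hz0 hz _ x
  refine ⟨hlt, ?_⟩
  have hne := Set.nonempty_iff_ne_empty.2 (fun he => by
    unfold gammaIdx at hlt
    rw [he, _root_.sInf_empty] at hlt
    exact lt_irrefl _ hlt : ((fun m : ℕ => (m : ℕ∞)) '' {m : ℕ | ∃ h : X → Fin m → ℂ,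
    ContinuousOn h A ∧ (∀ x ∈ A, h x ≠ 0) ∧
    (∀ x ∈ A, h (σ x) = Complex.exp (2 * π * Complex.I / p) • h x)}) ≠ ∅)
  obtain ⟨m, ⟨h, hc, hn, he⟩, hm⟩ := csInf_mem hne
  obtain ⟨g, hg⟩ := ContinuousMap.exists_restrict_eq hAcp.isClosed
    (⟨A.domRestrict h, hc.domRestrict⟩ : C(A, Fin m → ℂ))
  have hgA : ∀ x ∈ A, g x = h x := fun x hx => DFunLike.congr_fun hg ⟨x, hx⟩
  set G := avgZ p σ z g with hG
  have hGc : Continuous G := avgZ_cont p σ hσc z g g.continuous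
  have hGe : ∀ x, G (σ x) = z • G x := avgZ_equiv p σ hσp z hz0 hz g
  have hit : ∀ k : ℕ, ∀ x ∈ A, σ^[k] x ∈ A ∧ h (σ^[k] x) = z ^ k • h x := by
    intro k
    induction k with
    | zero => intro x hx; simpa using hx
    | succ k ih =>
      intro x hx
      obtain ⟨h1, h2⟩ := ih x hx
      rw [Function.iterate_succ_apply']
      refine ⟨hA _ h1, ?_⟩
      rw [he _ h1, h2, smul_smul, pow_succ']
  have hGA : ∀ x ∈ A, G x = (p : ℂ) • h x := by
    intro x hx
    have : G x = ∑ k ∈ Finset.range p, h x := by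
      refine Finset.sum_congr rfl fun k _ => ?_
      rw [hgA _ (hit k x hx).1, (hit k x hx).2, smul_smul, inv_mul_cancel₀ (pow_ne_zero k hz0),
        one_smul]
    rw [this, Finset.sum_const, Finset.card_range, Nat.cast_smul_eq_nsmul]
  have hGpos : ∀ x ∈ A, 0 < ‖G x‖ := by
    intro x hx
    rw [norm_pos_iff, hGA x hx]
    exact smul_ne_zero (Nat.cast_ne_zero.2 hp.ne_zero) (hn x hx)
  obtain ⟨d, hd0, hd⟩ : ∃ d : ℝ, 0 < d ∧ ∀ x ∈ A, d < ‖G x‖ := by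
    obtain ⟨d, hd0, hd⟩ := hAcp.exists_forall_le' hGc.norm.continuousOn hGpos
    exact ⟨d / 2, half_pos hd0, fun x hx => (half_lt_self hd0).trans_le (hd x hx)⟩
  have hGn : ∀ x, ‖G (σ x)‖ = ‖G x‖ := fun x => by rw [hGe, norm_smul, hzn, one_mul]
  have hcl : closure {x | d < ‖G x‖} ⊆ {x | d ≤ ‖G x‖} :=
    closure_minimal (fun x (hx : d < ‖G x‖) => hx.le) (isClosed_le continuous_const hGc.norm)
  refine ⟨{x | d < ‖G x‖}, isOpen_lt continuous_const hGc.norm, hd, ?_, ?_⟩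
  · apply Set.Subset.antisymm
    · rintro _ ⟨x, hx, rfl⟩
      simpa [hGn] using hx
    · intro x hx
      have hx' : σ (σ^[p - 1] x) = x := by
        rw [← Function.iterate_succ_apply' σ, Nat.succ_eq_add_one, Nat.sub_add_cancel hp.one_le, hσp]
        rfl
      refine ⟨σ^[p - 1] x, ?_, hx'⟩
      show d < ‖G _‖
      rw [← hGn, hx']
      exact hx
  · apply le_antisymm
    · have : gammaIdx p σ A = (m : ℕ∞) := hm.symm
      rw [this]
      refine sInf_le ⟨m, ⟨G, hGc.continuousOn, ?_, fun x _ => hGe x⟩, rfl⟩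
      intro x hx
      exact norm_pos_iff.1 (hd0.trans_le (hcl hx))
    · refine sInf_le_sInf (Set.image_mono ?_)
      rintro n ⟨f, h1, h2, h3⟩
      have hs : A ⊆ closure {x | d < ‖G x‖} := fun x hx => subset_closure (hd x hx)
      exact ⟨f, h1.mono hs, fun x hx => h2 x (hs hx), fun x hx => h3 x (hs hx)⟩

end
end

section
/- Let m ≥ 1, let W ⊂ ℂ^m be a bounded open neighborhood of 0 with e^{2πi/p}W = W, and let S = ∂W. If Ψ : S → X is continuous and satisfies Ψ(e^{2πi/p} z) = σ(Ψ(z)) for all z ∈ S, then Ψ(S) is a compact σ-invariant subset of X and γ(Ψ(S)) ≥ m. -/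
noncomputable section

open Real

section BU

open MeasureTheory Set Filter Topology

theorem bu_det_weights {E : Type*} [NormedAddCommGroup E] [NormedSpace ℝ E]
    [FiniteDimensional ℝ E] (hn : 1 ≤ Module.finrank ℝ E) (s : Finset ℝ)
    (hs : s.card = Module.finrank ℝ E + 1) :
    ∃ w : ℝ → ℝ, (∑ i ∈ s, w i = 0) ∧
      ∀ A : E →L[ℝ] E, A.det = ∑ i ∈ s, w i * (ContinuousLinearMap.id ℝ E + i • A).det := by
  classical
  set n := Module.finrank ℝ E with hnd
  let w : ℝ → ℝ := fun i => (∏ j ∈ s.erase i, (i - j))⁻¹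
  have key : ∀ P : Polynomial ℝ, P.natDegree ≤ n → P.coeff n = ∑ i ∈ s, w i * P.eval i := by
    intro P hP
    have h1 : P.degree < (s.card : WithBot ℕ) := by
      refine lt_of_le_of_lt Polynomial.degree_le_natDegree ?_
      rw [hs]; exact_mod_cast Nat.lt_succ_of_le hP
    have := Lagrange.coeff_eq_sum (s := s) (v := fun x : ℝ => x) (fun _ _ _ _ h => h) h1
    rw [hs, Nat.add_sub_cancel] at this
    rw [this]
    refine Finset.sum_congr rfl fun i _ => ?_
    simp only [w]
    rw [div_eq_inv_mul]
  refine ⟨w, ?_, ?_⟩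
  · have := key 1 (by simp)
    rw [Polynomial.coeff_one, if_neg (by omega)] at this
    simpa using this.symm
  · intro A
    let b := Module.finBasis ℝ E
    let M : Matrix (Fin n) (Fin n) ℝ := LinearMap.toMatrix b b (A : E →ₗ[ℝ] E)
    let P : Polynomial ℝ := ((Polynomial.X : Polynomial ℝ) • M.map (Polynomial.C (R := ℝ))
      + (1 : Matrix (Fin n) (Fin n) ℝ).map (Polynomial.C (R := ℝ))).det
    have hP := Polynomial.natDegree_det_X_add_C_le M (1 : Matrix (Fin n) (Fin n) ℝ)
    have hc := Polynomial.coeff_det_X_add_C_card M (1 : Matrix (Fin n) (Fin n) ℝ)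
    rw [Fintype.card_fin] at hP hc
    have := key P hP
    rw [hc] at this
    have hM : A.det = M.det := by
      rw [ContinuousLinearMap.det, ← LinearMap.det_toMatrix b]
    rw [hM, this]
    refine Finset.sum_congr rfl fun i _ => ?_
    congr 1
    rw [ContinuousLinearMap.det, ← LinearMap.det_toMatrix b]
    have h2 := RingHom.map_det (Polynomial.evalRingHom i) ((Polynomial.X : Polynomial ℝ) • M.map (Polynomial.C (R := ℝ))
      + (1 : Matrix (Fin n) (Fin n) ℝ).map (Polynomial.C (R := ℝ)))
    rw [Polynomial.coe_evalRingHom] at h2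
    rw [h2]
    congr 1
    ext a c
    simp [M, LinearMap.toMatrix_apply, Matrix.one_apply, Finsupp.single_apply, eq_comm, add_comm]
    split_ifs <;> simp [mul_comm]

theorem bu_vol_id_add {E : Type*} [NormedAddCommGroup E] [NormedSpace ℝ E]
    [FiniteDimensional ℝ E] [MeasurableSpace E] [BorelSpace E] (μ : Measure E)
    [μ.IsAddHaarMeasure] (H : E → E) (hH : ContDiff ℝ 1 H) (hHc : HasCompactSupport H)
    (K : Set E) (hKm : MeasurableSet K) (hHK : tsupport H ⊆ K) :
    ∃ η > 0, ∀ t : ℝ, |t| < η →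
      ∫ x in K, (ContinuousLinearMap.id ℝ E + t • fderiv ℝ H x).det ∂μ = μ.real K := by
  obtain ⟨C, hC⟩ := hH.lipschitzWith_of_hasCompactSupport hHc one_ne_zero
  have hdet : ∀ᶠ A : E →L[ℝ] E in 𝓝 (ContinuousLinearMap.id ℝ E), 0 < A.det := by
    refine ContinuousLinearMap.continuous_det.continuousAt.eventually (lt_mem_nhds ?_)
    simp [ContinuousLinearMap.det]
  obtain ⟨r, hr, hball⟩ := Metric.eventually_nhds_iff.1 hdet
  have hfd : ∀ x, ‖fderiv ℝ H x‖ ≤ C := fun x => norm_fderiv_le_of_lipschitz ℝ hC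
  refine ⟨min (1 / (C + 1)) (r / (C + 1)), by positivity, fun t ht => ?_⟩
  have hC1 : (0:ℝ) < C + 1 := by positivity
  have ht1 : |t| * (C + 1) < 1 := by
    have := lt_of_lt_of_le ht (min_le_left _ _); rwa [lt_div_iff₀ hC1] at this
  have ht2 : |t| * (C + 1) < r := by
    have := lt_of_lt_of_le ht (min_le_right _ _); rwa [lt_div_iff₀ hC1] at this
  have ht0 := abs_nonneg t
  have hCt : |t| * C < 1 := by nlinarith
  let f : E → E := fun x => x + t • H x
  have hlip : ∀ x y, ‖t • H x - t • H y‖ ≤ |t| * C * ‖x - y‖ := by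
    intro x y
    rw [← smul_sub, norm_smul, Real.norm_eq_abs, mul_assoc]
    have := hC.norm_sub_le x y
    gcongr
  have hinj : Function.Injective f := by
    intro x y hxy
    have h1 : x - y = -(t • H x - t • H y) := by
      have : x + t • H x = y + t • H y := hxy
      have : x - y = t • H y - t • H x := by
        rw [sub_eq_sub_iff_add_eq_add, this]; abel
      rw [this]; abel
    have h2 := hlip x y
    have h3 : ‖x - y‖ = ‖t • H x - t • H y‖ := by
      conv_lhs => rw [h1, norm_neg]
    rw [← h3] at h2
    have h4 := norm_nonneg (x - y)
    have : ‖x - y‖ = 0 := by nlinarith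
    exact sub_eq_zero.1 (norm_eq_zero.1 this)
  have hsurj : Function.Surjective f := by
    intro y
    have hcon : ContractingWith (⟨|t|, ht0⟩ * C) (fun x => y - t • H x) := by
      refine ⟨?_, LipschitzWith.of_dist_le_mul fun a b => ?_⟩
      · exact_mod_cast hCt
      · rw [dist_eq_norm, dist_eq_norm, sub_sub_sub_cancel_left, norm_sub_rev]
        exact hlip a b
    have : Nonempty E := ⟨0⟩
    obtain ⟨x, hx⟩ : ∃ x, y - t • H x = x := ⟨_, hcon.fixedPoint_isFixedPt⟩
    exact ⟨x, by simp only [f]; nth_rewrite 1 [← hx]; abel⟩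
  have hout : ∀ x ∉ K, f x = x := by
    intro x hx
    have : H x = 0 := image_eq_zero_of_notMem_tsupport fun h => hx (hHK h)
    simp [f, this]
  have himg : f '' K = K := by
    ext y
    constructor
    · rintro ⟨x, hx, rfl⟩
      by_contra h
      have := hout _ h
      have := hinj this
      rw [this] at h
      exact h hx
    · intro hy
      obtain ⟨x, rfl⟩ := hsurj y
      by_cases hx : x ∈ K
      · exact ⟨x, hx, rfl⟩
      · rw [hout x hx] at hy; exact absurd hy hx
  have hder : ∀ x, HasFDerivAt f (ContinuousLinearMap.id ℝ E + t • fderiv ℝ H x) x := fun x =>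
    (hasFDerivAt_id x).add (((hH.differentiable one_ne_zero) x).hasFDerivAt.const_smul t)
  have hcv := integral_image_eq_integral_abs_det_fderiv_smul μ hKm
    (fun x _ => (hder x).hasFDerivWithinAt) hinj.injOn (fun _ => (1:ℝ))
  rw [himg] at hcv
  simp only [smul_eq_mul, mul_one, integral_const, measureReal_restrict_apply_univ] at hcv
  rw [hcv]
  refine setIntegral_congr_fun hKm fun x _ => ?_
  refine (abs_of_pos (hball ?_)).symm
  rw [dist_eq_norm, add_sub_cancel_left, norm_smul, Real.norm_eq_abs]
  have := hfd x
  nlinarith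

theorem bu_integral_det_zero {E : Type*} [NormedAddCommGroup E] [NormedSpace ℝ E]
    [FiniteDimensional ℝ E] [MeasurableSpace E] [BorelSpace E] (μ : Measure E)
    [μ.IsAddHaarMeasure] (hn : 1 ≤ Module.finrank ℝ E)
    (H : E → E) (hH : ContDiff ℝ 1 H) (hHc : HasCompactSupport H) :
    ∫ x, (fderiv ℝ H x).det ∂μ = 0 := by
  obtain ⟨η, hη, hvol⟩ := bu_vol_id_add μ H hH hHc (tsupport H)
    (isClosed_tsupport H).measurableSet subset_rfl
  obtain ⟨s, hsub, hs⟩ := (Set.Ioo_infinite (show -η < η by linarith)).exists_subset_card_eq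
    (Module.finrank ℝ E + 1)
  obtain ⟨w, hw0, hw⟩ := bu_det_weights (E := E) hn s hs
  have h1 : ∫ x, (fderiv ℝ H x).det ∂μ = ∫ x in tsupport H, (fderiv ℝ H x).det ∂μ := by
    refine (setIntegral_eq_integral_of_forall_compl_eq_zero fun x hx => ?_).symm
    have : fderiv ℝ H x = 0 := by
      have := mt (fun h => (support_fderiv_subset ℝ (f := H)) h) hx
      simpa using this
    rw [this, ContinuousLinearMap.det, ContinuousLinearMap.toLinearMap_zero, LinearMap.det_zero,
      zero_pow (by omega)]
  rw [h1]
  simp_rw [hw (fderiv ℝ H _)]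
  have hcont : Continuous (fderiv ℝ H) := hH.continuous_fderiv one_ne_zero
  rw [integral_finsetSum]
  · calc _ = ∑ i ∈ s, w i * μ.real (tsupport H) := by
          refine Finset.sum_congr rfl fun i hi => ?_
          rw [integral_const_mul, hvol i (abs_lt.2 (hsub hi))]
      _ = 0 := by rw [← Finset.sum_mul, hw0, zero_mul]
  · intro i _
    refine ContinuousOn.integrableOn_compact hHc (Continuous.continuousOn ?_)
    exact continuous_const.mul (ContinuousLinearMap.continuous_det.comp (by fun_prop))

theorem bu_cutoff {E : Type*} [NormedAddCommGroup E] [NormedSpace ℝ E]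
    [FiniteDimensional ℝ E] (K U : Set E) (hK : IsCompact K) (hU : IsOpen U) (hKU : K ⊆ U) :
    ∃ χ : E → ℝ, ContDiff ℝ 1 χ ∧ HasCompactSupport χ ∧ tsupport χ ⊆ U ∧
      (∀ x ∈ K, ∀ᶠ y in 𝓝 x, χ y = 1) ∧ ∀ x, χ x ∈ Icc (0:ℝ) 1 := by
  obtain ⟨L, hL, hKL, hLU⟩ := exists_compact_between hK hU hKU
  obtain ⟨f, h1, h0, hf⟩ := exists_contMDiffMap_one_nhds_of_subset_interior (n := 1)
    (modelWithCornersSelf ℝ E) hK.isClosed hKL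
  have hts : tsupport f ⊆ L := closure_minimal (fun x hx => by
    by_contra h; exact hx (h0 x h)) hL.isClosed
  refine ⟨f, f.contMDiff.contDiff, ?_, hts.trans hLU, ?_, hf⟩
  · exact hL.of_isClosed_subset (isClosed_tsupport _) hts
  · intro x hx
    exact h1.filter_mono (nhds_le_nhdsSet hx)

theorem bu_integral_det_perturb {E : Type*} [NormedAddCommGroup E] [NormedSpace ℝ E]
    [FiniteDimensional ℝ E] [MeasurableSpace E] [BorelSpace E] (μ : Measure E)
    [μ.IsAddHaarMeasure] (hn : 1 ≤ Module.finrank ℝ E)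
    (P Q : E → E) (hP : ContDiff ℝ 1 P) (hQ : ContDiff ℝ 1 Q)
    (hc : HasCompactSupport (P - Q)) (hQ0 : ∀ x, (fderiv ℝ Q x).det = 0) :
    ∫ x, (fderiv ℝ P x).det ∂μ = 0 := by
  obtain ⟨χ, hχ, hχc, -, hχ1, -⟩ := bu_cutoff (tsupport (P - Q)) univ hc isOpen_univ (subset_univ _)
  set S := tsupport (P - Q) with hS
  have hSm : MeasurableSet S := (isClosed_tsupport _).measurableSet
  have hout : ∀ x ∉ S, P =ᶠ[𝓝 x] Q := by
    intro x hx
    filter_upwards [(isClosed_tsupport (P - Q)).isOpen_compl.mem_nhds hx] with y hy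
    have : (P - Q) y = 0 := image_eq_zero_of_notMem_tsupport hy
    exact sub_eq_zero.1 this
  have hin : ∀ (R : E → E), ∀ x ∈ S, fderiv ℝ (fun y => χ y • R y) x = fderiv ℝ R x := by
    intro R x hx
    refine Filter.EventuallyEq.fderiv_eq ?_
    filter_upwards [hχ1 x hx] with y hy
    simp [hy]
  have hsplit : ∀ (R : E → E), ContDiff ℝ 1 R →
      ∫ x in S, (fderiv ℝ R x).det ∂μ
        + ∫ x in Sᶜ, (fderiv ℝ (fun y => χ y • R y) x).det ∂μ = 0 := by
    intro R hR
    have hcd : ContDiff ℝ 1 (fun y => χ y • R y) := hχ.smul hR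
    have hcs : HasCompactSupport (fun y => χ y • R y) := hχc.smul_right
    have h0 := bu_integral_det_zero μ hn _ hcd hcs
    have hint : Integrable (fun x => (fderiv ℝ (fun y => χ y • R y) x).det) μ := by
      refine Continuous.integrable_of_hasCompactSupport
        (ContinuousLinearMap.continuous_det.comp (hcd.continuous_fderiv one_ne_zero)) ?_
      refine (hcs.fderiv (𝕜 := ℝ)).comp_left (g := fun A : E →L[ℝ] E => A.det) ?_
      rw [ContinuousLinearMap.det, ContinuousLinearMap.toLinearMap_zero, LinearMap.det_zero,
        zero_pow (by omega)]
    rw [← integral_add_compl hSm hint] at h0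
    rw [← h0]
    congr 1
    refine setIntegral_congr_fun hSm fun x hx => ?_
    simp only [hin R x hx]
  have h1 := hsplit P hP
  have h2 := hsplit Q hQ
  have h3 : ∫ x in Sᶜ, (fderiv ℝ (fun y => χ y • P y) x).det ∂μ
      = ∫ x in Sᶜ, (fderiv ℝ (fun y => χ y • Q y) x).det ∂μ := by
    refine setIntegral_congr_fun hSm.compl fun x hx => ?_
    have : (fun y => χ y • P y) =ᶠ[𝓝 x] fun y => χ y • Q y := by
      filter_upwards [hout x hx] with y hy
      rw [hy]
    simp only [this.fderiv_eq]
  have h4 : ∫ x in S, (fderiv ℝ Q x).det ∂μ = 0 := by simp [hQ0]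
  have h5 : ∫ x in S, (fderiv ℝ P x).det ∂μ = 0 := by linarith
  rw [← h5]
  refine (setIntegral_eq_integral_of_forall_compl_eq_zero fun x hx => ?_).symm
  rw [(hout x hx).fderiv_eq, hQ0]


theorem bu_count {E : Type*} [NormedAddCommGroup E] [NormedSpace ℝ E]
    [FiniteDimensional ℝ E] [MeasurableSpace E] [BorelSpace E] (μ : Measure E)
    [μ.IsAddHaarMeasure] (G : E → E) (hG : ContDiff ℝ 1 G) (W : Set E) (hW : IsOpen W)
    (hWc : IsCompact (closure W)) (Z : Finset E) (hZW : ∀ z ∈ Z, z ∈ W) (hZ0 : ∀ z ∈ Z, G z = 0)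
    (hZ : ∀ z ∈ closure W, G z = 0 → z ∈ Z) (hreg : ∀ z ∈ Z, (fderiv ℝ G z).det ≠ 0) :
    ∃ ε > 0, ∀ φ : E → ℝ, Continuous φ → Function.support φ ⊆ Metric.ball 0 ε →
      ∫ x in W, φ (G x) * (fderiv ℝ G x).det ∂μ
        = (∑ z ∈ Z, SignType.sign (fderiv ℝ G z).det : ℝ) * ∫ y, φ y ∂μ := by
  classical
  have hdc : Continuous fun x => (fderiv ℝ G x).det :=
    ContinuousLinearMap.continuous_det.comp (hG.continuous_fderiv one_ne_zero)
  obtain ⟨U, hU, hUd⟩ := Z.finite_toSet.t2_separation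
  have hloc : ∀ z ∈ Z, ∃ V : Set E, IsOpen V ∧ z ∈ V ∧ V ⊆ W ∧ V ⊆ U z ∧ InjOn G V ∧
      G '' V ∈ 𝓝 (0 : E) ∧
      ∀ x ∈ V, |(fderiv ℝ G x).det| * (SignType.sign (fderiv ℝ G z).det : ℝ)
        = (fderiv ℝ G x).det := by
    intro z hz
    have hst : HasStrictFDerivAt G
        (((fderiv ℝ G z).toContinuousLinearEquivOfDetNeZero (hreg z hz) : E ≃L[ℝ] E) : E →L[ℝ] E)
        z := by
      have := hG.contDiffAt.hasStrictFDerivAt (x := z) one_ne_zero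
      convert this using 1
      ext v; simp
    let e := hst.toOpenPartialHomeomorph G
    have hez : z ∈ e.source := hst.mem_toOpenPartialHomeomorph_source
    have hsg : {x | SignType.sign (fderiv ℝ G x).det = SignType.sign (fderiv ℝ G z).det} ∈ 𝓝 z := by
      rcases lt_or_gt_of_ne (hreg z hz) with h | h
      · filter_upwards [hdc.continuousAt.eventually (gt_mem_nhds h)] with x hx
        simp [sign_neg h, sign_neg hx]
      · filter_upwards [hdc.continuousAt.eventually (lt_mem_nhds h)] with x hx
        simp [sign_pos h, sign_pos hx]
    obtain ⟨N, hN, hNo, hzN⟩ := mem_nhds_iff.1 hsg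
    have hVo : IsOpen (e.source ∩ W ∩ U z ∩ N) :=
      ((e.open_source.inter hW).inter (hU z).2).inter hNo
    refine ⟨e.source ∩ W ∩ U z ∩ N, hVo, ⟨⟨⟨hez, hZW z hz⟩, (hU z).1⟩, hzN⟩,
      fun x hx => hx.1.1.2, fun x hx => hx.1.2, ?_, ?_, ?_⟩
    · exact e.injOn.mono fun x hx => hx.1.1.1
    · have ho : IsOpen (e '' (e.source ∩ W ∩ U z ∩ N)) :=
        e.isOpen_image_of_subset_source hVo fun x hx => hx.1.1.1
      refine ho.mem_nhds ⟨z, ⟨⟨⟨hez, hZW z hz⟩, (hU z).1⟩, hzN⟩, ?_⟩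
      exact hZ0 z hz
    · intro x hx
      have h1 := hN hx.2
      simp only [mem_ofPred_eq] at h1
      rw [← h1, mul_comm]
      exact sign_mul_abs _
  choose! V hVo hzV hVW hVU hinj himg hsign using hloc
  have hVd : (Z : Set E).PairwiseDisjoint V := fun a ha b hb hab =>
    (hUd ha hb hab).mono (hVU a ha) (hVU b hb)
  have hε1 : ∃ ε > 0, ∀ z ∈ Z, Metric.ball (0:E) ε ⊆ G '' V z := by
    have : (⋂ z ∈ Z, G '' V z) ∈ 𝓝 (0:E) := (Filter.biInter_finset_mem Z).2 himg
    obtain ⟨ε, h0, h⟩ := Metric.mem_nhds_iff.1 this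
    exact ⟨ε, h0, fun z hz => h.trans (biInter_subset_of_mem hz)⟩
  obtain ⟨ε1, hε1, hb1⟩ := hε1
  have hUo : IsOpen (⋃ z ∈ Z, V z) := isOpen_biUnion hVo
  have hε2 : ∃ ε > 0, ∀ x ∈ closure W \ ⋃ z ∈ Z, V z, ε ≤ ‖G x‖ := by
    rcases (closure W \ ⋃ z ∈ Z, V z).eq_empty_or_nonempty with h | h
    · exact ⟨1, one_pos, by simp [h]⟩
    · obtain ⟨x, hx, hm⟩ := (hWc.diff hUo).exists_isMinOn h (hG.continuous.norm.continuousOn)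
      refine ⟨‖G x‖, norm_pos_iff.2 fun h0 => ?_, fun y hy => hm hy⟩
      exact hx.2 (mem_biUnion (hZ x hx.1 h0) (hzV x (hZ x hx.1 h0)))
  obtain ⟨ε2, hε2, hb2⟩ := hε2
  refine ⟨min ε1 ε2, lt_min hε1 hε2, fun φ hφ hsup => ?_⟩
  have hcont : Continuous fun x => φ (G x) * (fderiv ℝ G x).det := (hφ.comp hG.continuous).mul hdc
  have hint : IntegrableOn (fun x => φ (G x) * (fderiv ℝ G x).det) (closure W) μ :=
    hcont.continuousOn.integrableOn_compact hWc
  have hsub : (⋃ z ∈ Z, V z) ⊆ W := iUnion₂_subset hVW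
  have h1 : ∫ x in W, φ (G x) * (fderiv ℝ G x).det ∂μ
      = ∫ x in ⋃ z ∈ Z, V z, φ (G x) * (fderiv ℝ G x).det ∂μ := by
    refine setIntegral_eq_of_subset_of_forall_sdiff_eq_zero hW.measurableSet hsub fun x hx => ?_
    have : φ (G x) = 0 := by
      by_contra h
      have := hsup h
      rw [mem_ball_zero_iff] at this
      have h2 := hb2 x ⟨subset_closure hx.1, hx.2⟩
      have := min_le_right ε1 ε2
      linarith
    rw [this, zero_mul]
  rw [h1, integral_biUnion_finset Z (fun z hz => (hVo z hz).measurableSet) hVd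
    (fun z hz => hint.mono_set ((hVW z hz).trans subset_closure)), Finset.sum_mul]
  refine Finset.sum_congr rfl fun z hz => ?_
  have hcv := integral_image_eq_integral_abs_det_fderiv_smul μ (hVo z hz).measurableSet
    (fun x _ => ((hG.differentiable one_ne_zero) x).hasFDerivAt.hasFDerivWithinAt) (hinj z hz) φ
  have h2 : ∫ y in G '' V z, φ y ∂μ = ∫ y, φ y ∂μ := by
    refine setIntegral_eq_integral_of_forall_compl_eq_zero fun y hy => ?_
    by_contra h
    exact hy (hb1 z hz (Metric.ball_subset_ball (min_le_left _ _) (hsup h)))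
  rw [← h2, hcv, ← integral_const_mul]
  refine setIntegral_congr_fun (hVo z hz).measurableSet fun x hx => ?_
  have := hsign z hz x hx
  simp only [smul_eq_mul]
  conv_lhs => rw [← this]
  ring

theorem bu_det_block (a b : ℝ) :
    (a • (Complex.reCLM.smulRight (1:ℂ)) + b • (Complex.imCLM.smulRight Complex.I) :
      ℂ →L[ℝ] ℂ).det = a * b := by
  rw [ContinuousLinearMap.det, ← LinearMap.det_toMatrix Complex.basisOneI, Matrix.det_fin_two]
  simp [LinearMap.toMatrix_apply]

theorem bu_prim (ε : ℝ) (hε : 0 < ε) : ∃ (s b : ℝ → ℝ), ContDiff ℝ 1 s ∧ Continuous b ∧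
    (∀ x, HasDerivAt s (b x) x) ∧ (∀ x, 0 ≤ b x) ∧ 0 < b 0 ∧ ∀ x, b x ≠ 0 → |x| < ε := by
  let β : ContDiffBump (0:ℝ) := ⟨ε / 2, ε, by positivity, by linarith⟩
  have hd : ∀ x, HasDerivAt (fun x => ∫ t in (0:ℝ)..x, β t) (β x) x := fun x =>
    β.continuous.integral_hasStrictDerivAt 0 x |>.hasDerivAt
  refine ⟨_, β, ?_, β.continuous, hd, fun x => β.nonneg, ?_, ?_⟩
  · rw [contDiff_one_iff_deriv]
    refine ⟨fun x => (hd x).differentiableAt, ?_⟩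
    rw [show deriv (fun x => ∫ t in (0:ℝ)..x, β t) = β from funext fun x => (hd x).deriv]
    exact β.continuous
  · exact β.pos_of_mem_ball (by simp [β, hε])
  · intro x hx
    have : x ∈ Function.support β := hx
    rw [β.support_eq] at this
    simpa [β] using this

theorem bu_conc (m : ℕ) (ε : ℝ) (hε : 0 < ε) :
    ∃ Φ : (Fin m → ℂ) → (Fin m → ℂ), ContDiff ℝ 1 Φ ∧
      (Function.support fun y => (fderiv ℝ Φ y).det) ⊆ Metric.ball 0 ε ∧
      0 < ∫ y, (fderiv ℝ Φ y).det := by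
  obtain ⟨s, b, hs, hb, hd, hb0, hbpos, hbs⟩ := bu_prim (ε / 2) (by positivity)
  let Φ : (Fin m → ℂ) → (Fin m → ℂ) := fun y j =>
    s (y j).re • (1:ℂ) + s (y j).im • Complex.I
  have hΦ : ContDiff ℝ 1 Φ := by
    rw [contDiff_pi]
    intro j
    have h1 : ContDiff ℝ 1 fun y : Fin m → ℂ => (y j).re :=
      Complex.reCLM.contDiff.comp (contDiff_apply ℝ ℂ j)
    have h2 : ContDiff ℝ 1 fun y : Fin m → ℂ => (y j).im :=
      Complex.imCLM.contDiff.comp (contDiff_apply ℝ ℂ j)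
    exact ((hs.comp h1).smul contDiff_const).add ((hs.comp h2).smul contDiff_const)
  have hder : ∀ y, HasFDerivAt Φ (ContinuousLinearMap.pi fun j =>
      (b (y j).re • (Complex.reCLM.smulRight (1:ℂ)) + b (y j).im • (Complex.imCLM.smulRight
        Complex.I) : ℂ →L[ℝ] ℂ) ∘SL ContinuousLinearMap.proj j) y := by
    intro y
    rw [hasFDerivAt_pi]
    intro j
    have hw : HasFDerivAt (fun w : ℂ => s w.re • (1:ℂ) + s w.im • Complex.I)
        (b (y j).re • (Complex.reCLM.smulRight (1:ℂ)) + b (y j).im • (Complex.imCLM.smulRight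
        Complex.I) : ℂ →L[ℝ] ℂ) (y j) := by
      have h1 := ((hd (y j).re).comp_hasFDerivAt (y j) Complex.reCLM.hasFDerivAt).smul_const (1:ℂ)
      have h2 := ((hd (y j).im).comp_hasFDerivAt (y j) Complex.imCLM.hasFDerivAt).smul_const
        Complex.I
      refine (h1.add h2).congr_fderiv ?_
      ext; simp [mul_assoc]
    exact hw.comp y (ContinuousLinearMap.proj (R := ℝ) (φ := fun _ : Fin m => ℂ) j).hasFDerivAt
  have hdet : ∀ y, (fderiv ℝ Φ y).det = ∏ j, b (y j).re * b (y j).im := by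
    intro y
    rw [(hder y).fderiv, ContinuousLinearMap.det_pi]
    exact Finset.prod_congr rfl fun j _ => bu_det_block _ _
  have hsupp : (Function.support fun y => (fderiv ℝ Φ y).det) ⊆ Metric.ball 0 ε := by
    intro y hy
    rw [Function.mem_support, hdet, Finset.prod_ne_zero_iff] at hy
    rw [mem_ball_zero_iff, pi_norm_lt_iff hε]
    intro j
    have h := mul_ne_zero_iff.1 (hy j (Finset.mem_univ j))
    have h1 := hbs _ h.1
    have h2 := hbs _ h.2
    have := Complex.norm_le_abs_re_add_abs_im (y j)
    linarith
  refine ⟨Φ, hΦ, hsupp, ?_⟩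
  refine Continuous.integral_pos_of_hasCompactSupport_nonneg_nonzero (x := 0) ?_ ?_ ?_ ?_
  · exact ContinuousLinearMap.continuous_det.comp (hΦ.continuous_fderiv one_ne_zero)
  · refine HasCompactSupport.intro' (isCompact_closedBall (0 : Fin m → ℂ) ε)
      Metric.isClosed_closedBall fun x hx => ?_
    by_contra h
    exact hx (Metric.ball_subset_closedBall (hsupp h))
  · intro y
    simp only [Pi.zero_apply]
    rw [hdet]
    exact Finset.prod_nonneg fun j _ => mul_nonneg (hb0 _) (hb0 _)
  · rw [hdet]
    refine (Finset.prod_pos fun j _ => ?_).ne'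
    simp [hbpos]


theorem bu_det_ne_zero_iff {E : Type*} [NormedAddCommGroup E] [NormedSpace ℝ E]
    [FiniteDimensional ℝ E] (A : E →L[ℝ] E) : A.det ≠ 0 ↔ ∀ v, A v = 0 → v = 0 := by
  rw [ContinuousLinearMap.det, ← isUnit_iff_ne_zero, ← LinearMap.isUnit_iff_isUnit_det,
    LinearMap.isUnit_iff_ker_eq_bot, LinearMap.ker_eq_bot']
  rfl

theorem bu_shift {E : Type*} [NormedAddCommGroup E] [NormedSpace ℝ E]
    [FiniteDimensional ℝ E] (A : E →L[ℝ] E) (η : ℝ) (hη : 0 < η) :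
    ∃ c : ℝ, 0 < c ∧ c < η ∧ (A + c • ContinuousLinearMap.id ℝ E).det ≠ 0 := by
  have hfin : {c : ℝ | Module.End.HasEigenvalue (A : E →ₗ[ℝ] E) c}.Finite :=
    Module.End.finite_hasEigenvalue _
  have hinf := (Set.Ioo_infinite (show -η < 0 by linarith)).sdiff hfin
  obtain ⟨c, hc, hce⟩ := hinf.nonempty
  refine ⟨-c, by linarith [hc.2], by linarith [hc.1], ?_⟩
  rw [bu_det_ne_zero_iff]
  intro v hv
  by_contra hne
  refine hce (Module.End.hasEigenvalue_of_hasEigenvector (x := v) ⟨?_, hne⟩)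
  rw [Module.End.mem_eigenspace_iff]
  have : A v - c • v = 0 := by simpa [sub_eq_add_neg] using hv
  exact sub_eq_zero.1 this

theorem bu_sard {m : ℕ} (k : Fin m) (p : ℕ) (G : (Fin m → ℂ) → (Fin m → ℂ))
    (hG : ContDiff ℝ 1 G) (η : ℝ) (hη : 0 < η) :
    ∃ y : Fin m → ℂ, ‖y‖ < η ∧ ∀ z : Fin m → ℂ, z k ≠ 0 → G z - (z k) ^ (p + 1) • y = 0 →
      (fderiv ℝ (fun w : Fin m → ℂ => G w - (w k) ^ (p + 1) • y) z).det ≠ 0 := by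
  let Q : (Fin m → ℂ) → ℂ := fun z => (z k) ^ (p + 1)
  have hQ : ContDiff ℝ 1 Q := (contDiff_apply ℝ ℂ k).pow _
  let f : (Fin m → ℂ) → (Fin m → ℂ) := fun z => (Q z)⁻¹ • G z
  let S : Set (Fin m → ℂ) := {z | z k ≠ 0}
  have hS : IsOpen S := isOpen_ne_fun (continuous_apply k) continuous_const
  have hQS : ∀ z ∈ S, Q z ≠ 0 := fun z hz => pow_ne_zero _ hz
  have hf : ∀ z ∈ S, DifferentiableAt ℝ f z := by
    intro z hz
    exact ((hQ.differentiable one_ne_zero z).inv (hQS z hz)).smul (hG.differentiable one_ne_zero z)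
  have hnull : volume (f '' {z | z ∈ S ∧ (fderiv ℝ f z).det = 0}) = 0 :=
    addHaar_image_eq_zero_of_det_fderivWithin_eq_zero volume
      (fun z hz => (hf z hz.1).hasFDerivAt.hasFDerivWithinAt) (fun z hz => hz.2)
  have hdense : Dense {y | y ∉ f '' {z | z ∈ S ∧ (fderiv ℝ f z).det = 0}} :=
    Measure.dense_of_ae (μ := volume) (measure_eq_zero_iff_ae_notMem.1 hnull)
  obtain ⟨y, hy, hyη⟩ := hdense.exists_dist_lt 0 hη
  rw [dist_zero_left] at hyη
  refine ⟨y, hyη, fun z hz h0 => ?_⟩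
  have hzS : z ∈ S := hz
  have hfy : f z = y := by
    have : G z = Q z • y := sub_eq_zero.1 h0
    simp only [f, this]
    rw [inv_smul_smul₀ (hQS z hzS)]
  have hne : (fderiv ℝ f z).det ≠ 0 := fun h => hy ⟨z, ⟨hzS, h⟩, hfy⟩
  have heq : (fun w : Fin m → ℂ => G w - (w k) ^ (p + 1) • y) =ᶠ[𝓝 z]
      fun w => Q w • (f w - y) := by
    filter_upwards [hS.mem_nhds hzS] with w hw
    rw [smul_sub]
    simp only [f]
    rw [smul_inv_smul₀ (hQS w hw)]
  rw [heq.fderiv_eq]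
  have hd := ((hQ.differentiable one_ne_zero z).hasFDerivAt).smul
    ((hf z hzS).hasFDerivAt.sub_const y)
  have hd' : fderiv ℝ (fun w => Q w • (f w - y)) z = _ := hd.fderiv
  rw [hd']
  rw [bu_det_ne_zero_iff] at hne ⊢
  intro v hv
  refine hne v ?_
  simp only [hfy, sub_self] at hv
  simpa [hQS z hzS] using hv

theorem bu_regular (m p : ℕ) (hp : 1 ≤ p) (ζ : ℂ) (hζ : ζ ^ p = 1)
    (F : (Fin m → ℂ) → (Fin m → ℂ)) (hF : ContDiff ℝ 1 F) (hFe : ∀ z, F (ζ • z) = ζ • F z)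
    (R : ℝ) (hR : 0 ≤ R) (δ : ℝ) (hδ : 0 < δ) :
    ∃ G : (Fin m → ℂ) → (Fin m → ℂ), ContDiff ℝ 1 G ∧ (∀ z, G (ζ • z) = ζ • G z) ∧
      (∀ z, ‖z‖ ≤ R → ‖G z - F z‖ < δ) ∧ ∀ z, G z = 0 → (fderiv ℝ G z).det ≠ 0 := by
  have main : ∀ k ≤ m, ∀ δ > 0, ∃ G : (Fin m → ℂ) → (Fin m → ℂ), ContDiff ℝ 1 G ∧
      (∀ z, G (ζ • z) = ζ • G z) ∧ (∀ z, ‖z‖ ≤ R → ‖G z - F z‖ < δ) ∧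
      ∀ z, G z = 0 → (z = 0 ∨ ∃ i : Fin m, i.val < k ∧ z i ≠ 0) → (fderiv ℝ G z).det ≠ 0 := by
    intro k
    induction k with
    | zero =>
      intro _ δ hδ
      obtain ⟨c, hc0, hc, hdet⟩ := bu_shift (fderiv ℝ F 0) (δ / (R + 1)) (by positivity)
      refine ⟨fun z => F z + c • z, hF.add (contDiff_id.const_smul c), ?_, ?_, ?_⟩
      · intro z
        simp only []
        rw [hFe, smul_add, smul_comm]
      · intro z hz
        rw [add_sub_cancel_left, norm_smul, Real.norm_eq_abs, abs_of_pos hc0]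
        rw [lt_div_iff₀ (by positivity)] at hc
        have := norm_nonneg z
        nlinarith
      · rintro z - (rfl | ⟨i, hi, -⟩)
        · have : HasFDerivAt (fun z => F z + c • z)
              (fderiv ℝ F 0 + c • ContinuousLinearMap.id ℝ (Fin m → ℂ)) 0 :=
            (hF.differentiable one_ne_zero 0).hasFDerivAt.add ((hasFDerivAt_id _).const_smul c)
          rw [this.fderiv]
          exact hdet
        · omega
    | succ k ih =>
      intro hk δ hδ
      obtain ⟨G, hG, hGe, hGF, hreg⟩ := ih (by omega) (δ / 2) (by positivity)
      let κ : Fin m := ⟨k, by omega⟩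
      obtain ⟨y, hy, hyreg⟩ := bu_sard κ p G hG (δ / 2 / (R ^ (p + 1) + 1)) (by positivity)
      refine ⟨fun w => G w - (w κ) ^ (p + 1) • y,
        hG.sub (((contDiff_apply ℝ ℂ κ).pow _).smul contDiff_const), ?_, ?_, ?_⟩
      · intro z
        simp only [Pi.smul_apply, smul_eq_mul]
        rw [hGe, smul_sub, mul_pow, pow_succ, hζ, one_mul, mul_smul]
      · intro z hz
        have h1 := hGF z hz
        have h2 : ‖(z κ) ^ (p + 1) • y‖ ≤ δ / 2 := by
          rw [norm_smul, norm_pow]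
          have h3 : ‖z κ‖ ≤ R := (norm_le_pi_norm z κ).trans hz
          rw [lt_div_iff₀ (by positivity)] at hy
          have h4 : ‖z κ‖ ^ (p + 1) ≤ R ^ (p + 1) := by gcongr
          have := norm_nonneg y
          nlinarith
        calc ‖G z - (z κ) ^ (p + 1) • y - F z‖ = ‖(G z - F z) - (z κ) ^ (p + 1) • y‖ := by
              congr 1; abel
          _ ≤ ‖G z - F z‖ + ‖(z κ) ^ (p + 1) • y‖ := norm_sub_le _ _
          _ < δ := by linarith
      · intro z hz hor
        by_cases hzk : z κ = 0
        · have hz' : G z = 0 := by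
            have := hz
            simp only [hzk] at this
            rwa [zero_pow (by omega), zero_smul, sub_zero] at this
          have hor' : z = 0 ∨ ∃ i : Fin m, i.val < k ∧ z i ≠ 0 := by
            rcases hor with h | ⟨i, hi, hne⟩
            · exact Or.inl h
            · refine Or.inr ⟨i, ?_, hne⟩
              rcases Nat.lt_succ_iff_lt_or_eq.1 hi with h | h
              · exact h
              · exact absurd (by rwa [show i = κ from Fin.ext h]) hne
          have hd0 : HasFDerivAt (fun w : Fin m → ℂ => (w κ) ^ (p + 1) • y)
              (0 : (Fin m → ℂ) →L[ℝ] (Fin m → ℂ)) z := by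
            have h1 : HasFDerivAt (fun w : Fin m → ℂ => w κ)
                (ContinuousLinearMap.proj (R := ℝ) (φ := fun _ : Fin m => ℂ) κ) z :=
              (ContinuousLinearMap.proj (R := ℝ) (φ := fun _ : Fin m => ℂ) κ).hasFDerivAt
            refine ((h1.pow (p + 1)).smul_const y).congr_fderiv ?_
            ext v
            simp [hzk, show p ≠ 0 by omega]
          have hd := (hG.differentiable one_ne_zero z).hasFDerivAt.sub hd0
          rw [sub_zero] at hd
          have : fderiv ℝ (fun w => G w - (w κ) ^ (p + 1) • y) z = fderiv ℝ G z := hd.fderiv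
          rw [this]
          exact hreg z hz' hor'
        · exact hyreg z hzk hz
  obtain ⟨G, h1, h2, h3, h4⟩ := main m le_rfl δ hδ
  refine ⟨G, h1, h2, h3, fun z hz => h4 z hz ?_⟩
  by_cases h : z = 0
  · exact Or.inl h
  · obtain ⟨i, hi⟩ := Function.ne_iff.1 h
    exact Or.inr ⟨i, i.2, hi⟩

theorem bu_card_mod {m p : ℕ} (hp : p.Prime) (ζ : ℂ) (hζ : ζ ^ p = 1) (hζ1 : ζ ≠ 1)
    (T : Finset (Fin m → ℂ)) (hT : ∀ z ∈ T, ζ • z ∈ T) :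
    ((0 : Fin m → ℂ) ∈ T → T.card ≡ 1 [MOD p]) ∧
    ((0 : Fin m → ℂ) ∉ T → T.card ≡ 0 [MOD p]) := by
  classical
  have : Fact p.Prime := ⟨hp⟩
  let f : Function.End T := fun z => ⟨ζ • z.1, hT z.1 z.2⟩
  have hpow : ∀ n : ℕ, ∀ z : T, ((f ^ n) z).1 = ζ ^ n • z.1 := by
    intro n
    induction n with
    | zero => intro z; rw [pow_zero, pow_zero, one_smul]; rfl
    | succ n ih =>
      intro z
      rw [pow_succ' f, pow_succ', mul_smul, ← ih z]
      rfl
  have hf : f ^ p ^ 1 = 1 := by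
    funext z
    apply Subtype.ext
    rw [pow_one, hpow, hζ, one_smul]
    rfl
  have hcard := Equiv.Perm.card_fixedPoints_modEq hf
  rw [Fintype.card_coe] at hcard
  have hfix : ∀ z : T, z ∈ Function.fixedPoints f ↔ z.1 = 0 := by
    intro z
    rw [Function.mem_fixedPoints, Function.IsFixedPt, Subtype.ext_iff]
    change ζ • z.1 = z.1 ↔ _
    constructor
    · intro h
      have : (ζ - 1) • z.1 = 0 := by rw [sub_smul, h, one_smul, sub_self]
      exact (smul_eq_zero.1 this).resolve_left (sub_ne_zero.2 hζ1)
    · intro h; rw [h, smul_zero]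
  constructor
  · intro h0
    refine hcard.trans ?_
    have : Fintype.card (Function.fixedPoints f) = 1 := by
      rw [Fintype.card_eq_one_iff]
      refine ⟨⟨⟨0, h0⟩, (hfix _).2 rfl⟩, fun y => ?_⟩
      exact Subtype.ext (Subtype.ext ((hfix _).1 y.2))
    rw [this]
  · intro h0
    refine hcard.trans ?_
    have : Fintype.card (Function.fixedPoints f) = 0 := by
      rw [Fintype.card_eq_zero_iff]
      refine ⟨fun y => h0 ?_⟩
      rw [← (hfix _).1 y.2]
      exact y.1.2
    rw [this]


theorem bu_sign_sum {α : Type*} (Z : Finset α) (d : α → ℝ) :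
    (∑ z ∈ Z, SignType.sign (d z) : ℝ)
      = ((Z.filter fun z => 0 < d z).card : ℝ) - ((Z.filter fun z => d z < 0).card : ℝ) := by
  rw [← Finset.sum_boole, ← Finset.sum_boole, ← Finset.sum_sub_distrib]
  refine Finset.sum_congr rfl fun z _ => ?_
  rcases lt_trichotomy (d z) 0 with h | h | h
  · simp [h, h.le, not_lt.2 h.le]
  · simp [h]
  · simp [h, not_lt.2 h.le]

theorem bu_det_rot {m : ℕ} (ζ : ℂ) (hζ0 : ζ ≠ 0) (G : (Fin m → ℂ) → (Fin m → ℂ))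
    (hG : ContDiff ℝ 1 G) (hGe : ∀ z, G (ζ • z) = ζ • G z) (z : Fin m → ℂ) :
    (fderiv ℝ G (ζ • z)).det = (fderiv ℝ G z).det := by
  let M : (Fin m → ℂ) →L[ℝ] (Fin m → ℂ) := ζ • ContinuousLinearMap.id ℝ (Fin m → ℂ)
  have hM : M.det ≠ 0 := by
    rw [bu_det_ne_zero_iff]
    intro v hv
    have : ζ • v = 0 := hv
    exact (smul_eq_zero.1 this).resolve_left hζ0
  have hMz : M z = ζ • z := rfl
  have h1 : HasFDerivAt (fun w => G (M w)) ((fderiv ℝ G (ζ • z)).comp M) z := by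
    have := (hG.differentiable one_ne_zero (ζ • z)).hasFDerivAt
    rw [← hMz] at this ⊢
    exact this.comp z M.hasFDerivAt
  have h2 : HasFDerivAt (fun w => M (G w)) (M.comp (fderiv ℝ G z)) z :=
    M.hasFDerivAt.comp z (hG.differentiable one_ne_zero z).hasFDerivAt
  have h3 : (fun w => G (M w)) = fun w => M (G w) := funext hGe
  rw [h3] at h1
  have h4 := h1.unique h2
  have h5 := congrArg ContinuousLinearMap.det h4
  have h6 : ∀ A B : (Fin m → ℂ) →L[ℝ] (Fin m → ℂ), (A.comp B).det = A.det * B.det := by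
    intro A B
    rw [ContinuousLinearMap.det, ContinuousLinearMap.toLinearMap_comp, LinearMap.det_comp]
  rw [h6, h6, mul_comm] at h5
  exact mul_left_cancel₀ hM h5

theorem bu_zeros_finite {E : Type*} [NormedAddCommGroup E] [NormedSpace ℝ E]
    [FiniteDimensional ℝ E] (G : E → E) (hG : ContDiff ℝ 1 G)
    (hreg : ∀ z, G z = 0 → (fderiv ℝ G z).det ≠ 0) (C : Set E) (hC : IsCompact C) :
    {z | z ∈ C ∧ G z = 0}.Finite := by
  by_contra hinf
  obtain ⟨x, hx, hacc⟩ := Set.Infinite.exists_accPt_of_subset_isCompact hinf hC fun z hz => hz.1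
  have hcl : IsClosed {z | G z = 0} := isClosed_eq hG.continuous continuous_const
  have hfr : ∃ᶠ y in 𝓝[≠] x, G y = 0 := by
    rw [accPt_iff_frequently_nhdsNE] at hacc
    exact hacc.mono fun y hy => hy.2
  have hGx : G x = 0 := by
    have : x ∈ closure {z | G z = 0} := mem_closure_iff_frequently.2
      (hfr.filter_mono nhdsWithin_le_nhds)
    rw [hcl.closure_eq] at this
    exact this
  let e := (fderiv ℝ G x).toContinuousLinearEquivOfDetNeZero (hreg x hGx)
  have hd : HasFDerivAt G (e : E →L[ℝ] E) x := by
    have := (hG.differentiable one_ne_zero x).hasFDerivAt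
    convert this using 1
    ext v; simp [e]
  exact hfr (hd.eventually_ne ⟨_, e.antilipschitz⟩)


theorem bu_main (m p : ℕ) (hp : p.Prime) (ζ : ℂ) (hζ : ζ ^ p = 1) (hζ1 : ζ ≠ 1)
    (W : Set (Fin m → ℂ)) (hWopen : IsOpen W) (hW0 : (0 : Fin m → ℂ) ∈ W)
    (hWbdd : Bornology.IsBounded W) (hWrot : ∀ z ∈ W, ζ • z ∈ W)
    (F : (Fin m → ℂ) → (Fin m → ℂ)) (hF : ContDiff ℝ 1 F) (hFe : ∀ z, F (ζ • z) = ζ • F z)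
    (hF0 : ∀ z ∈ frontier W, F z ≠ 0) (i0 : Fin m) (hFi : ∀ z, F z i0 = 0) : False := by
  classical
  have hζ0 : ζ ≠ 0 := by
    rintro rfl
    rw [zero_pow hp.ne_zero] at hζ
    exact zero_ne_one hζ
  have hcW : IsCompact (closure W) := hWbdd.isCompact_closure
  obtain ⟨R, hR0, hR⟩ : ∃ R : ℝ, 0 ≤ R ∧ ∀ z ∈ closure W, ‖z‖ ≤ R := by
    obtain ⟨R, hR⟩ := hcW.isBounded.exists_norm_le
    exact ⟨R, (norm_nonneg _).trans (hR 0 (subset_closure hW0)), hR⟩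
  have hfrc : IsCompact (frontier W) := hcW.of_isClosed_subset isClosed_frontier
    frontier_subset_closure
  obtain ⟨δ, hδ, hδF⟩ : ∃ δ > 0, ∀ z ∈ frontier W, 2 * δ < ‖F z‖ := by
    rcases (frontier W).eq_empty_or_nonempty with h | h
    · exact ⟨1, one_pos, by simp [h]⟩
    · obtain ⟨x, hx, hm⟩ := hfrc.exists_isMinOn h hF.continuous.norm.continuousOn
      have hpos : 0 < ‖F x‖ := norm_pos_iff.2 (hF0 x hx)
      refine ⟨‖F x‖ / 3, by positivity, fun y hy => ?_⟩
      have : ‖F x‖ ≤ ‖F y‖ := hm hy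
      linarith
  let K : Set (Fin m → ℂ) := {z | z ∈ closure W ∧ ‖F z‖ ≤ 2 * δ}
  have hK : IsCompact K := hcW.inter_right (isClosed_le hF.continuous.norm continuous_const)
  have hKW : K ⊆ W := by
    intro z hz
    by_contra h
    have : z ∈ frontier W := by
      rw [frontier, hWopen.interior_eq]; exact ⟨hz.1, h⟩
    have h1 := hδF z this
    have h2 := hz.2
    linarith
  obtain ⟨G, hG, hGe, hGF, hreg⟩ := bu_regular m p hp.one_lt.le ζ hζ F hF hFe R hR0 δ hδ
  have hfin := bu_zeros_finite G hG hreg (closure W) hcW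
  let Z : Finset (Fin m → ℂ) := hfin.toFinset
  have hZm : ∀ z, z ∈ Z ↔ z ∈ closure W ∧ G z = 0 := fun z => by simp [Z]
  have hZW : ∀ z ∈ Z, z ∈ W := by
    intro z hz
    obtain ⟨h1, h2⟩ := (hZm z).1 hz
    refine hKW ⟨h1, ?_⟩
    have := hGF z (hR z h1)
    rw [h2, zero_sub, norm_neg] at this
    linarith
  obtain ⟨ε, hε, hcount⟩ := bu_count volume G hG W hWopen hcW Z hZW (fun z hz => ((hZm z).1 hz).2)
    (fun z h1 h2 => (hZm z).2 ⟨h1, h2⟩) (fun z hz => hreg z ((hZm z).1 hz).2)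
  obtain ⟨Φ, hΦ, hΦs, hΦi⟩ := bu_conc m (min ε δ) (lt_min hε hδ)
  have hΦ0 : ∀ y, δ ≤ ‖y‖ → (fderiv ℝ Φ y).det = 0 := by
    intro y hy
    by_contra h
    have := hΦs h
    rw [mem_ball_zero_iff] at this
    have := min_le_right ε δ
    linarith
  have hcnt := hcount (fun y => (fderiv ℝ Φ y).det)
    (ContinuousLinearMap.continuous_det.comp (hΦ.continuous_fderiv one_ne_zero))
    (hΦs.trans (Metric.ball_subset_ball (min_le_left _ _)))
  obtain ⟨χ, hχ, hχc, hχW, hχ1, hχr⟩ := bu_cutoff K W hK hWopen hKW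
  let H : (Fin m → ℂ) → (Fin m → ℂ) := fun z => F z + χ z • (G z - F z)
  have hH : ContDiff ℝ 1 H := hF.add (hχ.smul (hG.sub hF))
  have hchain : ∀ (A : (Fin m → ℂ) → (Fin m → ℂ)), ContDiff ℝ 1 A → ∀ z,
      (fderiv ℝ (fun w => Φ (A w)) z).det = (fderiv ℝ Φ (A z)).det * (fderiv ℝ A z).det := by
    intro A hA z
    have := (hΦ.differentiable one_ne_zero (A z)).hasFDerivAt.comp z
      (hA.differentiable one_ne_zero z).hasFDerivAt
    have h' : fderiv ℝ (fun w => Φ (A w)) z = _ := this.fderiv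
    rw [h', ContinuousLinearMap.det, ContinuousLinearMap.toLinearMap_comp, LinearMap.det_comp]
  have hFdet : ∀ z, (fderiv ℝ F z).det = 0 := by
    intro z
    by_contra h
    rw [← ne_eq, bu_det_ne_zero_iff] at h
    have hinj : Function.Injective (fderiv ℝ F z : (Fin m → ℂ) →ₗ[ℝ] (Fin m → ℂ)) :=
      (injective_iff_map_eq_zero _).2 h
    obtain ⟨v, hv⟩ := LinearMap.injective_iff_surjective.1 hinj (fun _ => 1)
    have hd := (hasFDerivAt_pi'.1 (hF.differentiable one_ne_zero z).hasFDerivAt) i0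
    have hd0 : HasFDerivAt (fun w => F w i0) (0 : (Fin m → ℂ) →L[ℝ] ℂ) z := by
      simp only [hFi]
      exact hasFDerivAt_const _ _
    have := congrArg (fun L : (Fin m → ℂ) →L[ℝ] ℂ => L v) (hd.unique hd0)
    have h1 : (fderiv ℝ F z) v i0 = 0 := this
    have h2 : (fderiv ℝ F z) v = fun _ => 1 := hv
    rw [h2] at h1
    exact one_ne_zero h1
  have hm : 1 ≤ Module.finrank ℝ (Fin m → ℂ) := by
    have : Nonempty (Fin m) := ⟨i0⟩
    exact Nat.one_le_iff_ne_zero.2 Module.finrank_pos.ne'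
  have hzero := bu_integral_det_perturb volume hm (fun w => Φ (H w)) (fun w => Φ (F w))
    (hΦ.comp hH) (hΦ.comp hF) (by
      refine HasCompactSupport.intro' hχc (isClosed_tsupport _) fun x hx => ?_
      have : χ x = 0 := image_eq_zero_of_notMem_tsupport hx
      simp [H, this]) (fun z => by rw [hchain F hF, hFdet, mul_zero])
  have hWint : ∫ x, (fderiv ℝ (fun w => Φ (H w)) x).det
      = ∫ x in W, (fderiv ℝ Φ (G x)).det * (fderiv ℝ G x).det := by
    rw [← setIntegral_eq_integral_of_forall_compl_eq_zero (s := W)]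
    · refine setIntegral_congr_fun hWopen.measurableSet fun x hx => ?_
      rw [hchain H hH]
      by_cases hxK : x ∈ K
      · have heq : H =ᶠ[𝓝 x] G := by
          filter_upwards [hχ1 x hxK] with y hy
          simp [H, hy]
        rw [heq.fderiv_eq, heq.eq_of_nhds]
      · have hxc : x ∈ closure W := subset_closure hx
        have h1 : 2 * δ < ‖F x‖ := by
          by_contra h; exact hxK ⟨hxc, not_lt.1 h⟩
        have h2 := hGF x (hR x hxc)
        have h3 : ∀ t ∈ Icc (0:ℝ) 1, δ ≤ ‖F x + t • (G x - F x)‖ := by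
          intro t ht
          have h4 : ‖t • (G x - F x)‖ ≤ δ := by
            rw [norm_smul, Real.norm_eq_abs, abs_of_nonneg ht.1]
            have := norm_nonneg (G x - F x)
            nlinarith [ht.2]
          have h5 := norm_sub_le_norm_add (F x) (t • (G x - F x))
          linarith
        rw [hΦ0 (H x) (h3 _ (hχr x)), hΦ0 (G x) (by simpa using h3 1 (by simp))]
        simp
    · intro x hx
      have hx' : x ∉ tsupport χ := fun h => hx (hχW h)
      have heq : H =ᶠ[𝓝 x] F := by
        filter_upwards [(isClosed_tsupport χ).isOpen_compl.mem_nhds hx'] with y hy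
        have : χ y = 0 := image_eq_zero_of_notMem_tsupport hy
        simp [H, this]
      rw [hchain H hH, heq.fderiv_eq, hFdet, mul_zero]
  rw [hzero, hcnt] at hWint
  have hsum := (mul_eq_zero.1 hWint.symm).resolve_right hΦi.ne'
  rw [bu_sign_sum, sub_eq_zero, Nat.cast_inj] at hsum
  have hrotZ : ∀ z ∈ Z, ζ • z ∈ Z := by
    intro z hz
    refine (hZm _).2 ⟨subset_closure (hWrot z (hZW z hz)), ?_⟩
    rw [hGe, ((hZm z).1 hz).2, smul_zero]
  have hG0 : G 0 = 0 := by
    have h := hGe 0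
    rw [smul_zero] at h
    have : (ζ - 1) • G 0 = 0 := by rw [sub_smul, ← h, one_smul, sub_self]
    exact (smul_eq_zero.1 this).resolve_left (sub_ne_zero.2 hζ1)
  have h0Z : (0 : Fin m → ℂ) ∈ Z := (hZm 0).2 ⟨subset_closure hW0, hG0⟩
  have hc1 := bu_card_mod hp ζ hζ hζ1 (Z.filter fun z => 0 < (fderiv ℝ G z).det) (by
    intro z hz
    rw [Finset.mem_filter] at hz ⊢
    exact ⟨hrotZ z hz.1, by rw [bu_det_rot ζ hζ0 G hG hGe]; exact hz.2⟩)
  have hc2 := bu_card_mod hp ζ hζ hζ1 (Z.filter fun z => (fderiv ℝ G z).det < 0) (by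
    intro z hz
    rw [Finset.mem_filter] at hz ⊢
    exact ⟨hrotZ z hz.1, by rw [bu_det_rot ζ hζ0 G hG hGe]; exact hz.2⟩)
  have h01 : ¬ (1 ≡ 0 [MOD p]) := by
    intro h
    have := (Nat.modEq_zero_iff_dvd).1 h
    exact hp.one_lt.ne' (Nat.dvd_one.1 this)
  rcases lt_or_gt_of_ne (hreg 0 hG0) with h | h
  · have a1 := hc1.2 (by simp [h.le])
    have a2 := hc2.1 (by simp [h, h0Z])
    rw [hsum] at a1
    exact h01 (a2.symm.trans a1)
  · have a1 := hc1.1 (by simp [h, h0Z])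
    have a2 := hc2.2 (by simp [h.le])
    rw [← hsum] at a2
    exact h01 (a1.symm.trans a2)

theorem bu_smooth (m p : ℕ) (hp : p.Prime) (ζ : ℂ) (hζ : ζ ^ p = 1) (hζn : ‖ζ‖ = 1)
    (C : Set (Fin m → ℂ)) (hC : IsCompact C) (hCrot : ∀ z ∈ C, ζ • z ∈ C)
    (g : (Fin m → ℂ) → (Fin m → ℂ)) (hg : ContinuousOn g C) (hge : ∀ z ∈ C, g (ζ • z) = ζ • g z)
    (hg0 : ∀ z ∈ C, g z ≠ 0) (i0 : Fin m) (hgi : ∀ z ∈ C, g z i0 = 0) :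
    ∃ F : (Fin m → ℂ) → (Fin m → ℂ), ContDiff ℝ 1 F ∧ (∀ z, F (ζ • z) = ζ • F z) ∧
      (∀ z ∈ C, F z ≠ 0) ∧ ∀ z, F z i0 = 0 := by
  classical
  have hζ0 : ζ ≠ 0 := by
    rintro rfl
    simp at hζn
  obtain ⟨η, hη, hηg⟩ : ∃ η > 0, ∀ z ∈ C, η ≤ ‖g z‖ := by
    rcases C.eq_empty_or_nonempty with h | h
    · exact ⟨1, one_pos, by simp [h]⟩
    · obtain ⟨x, hx, hm⟩ := hC.exists_isMinOn h hg.norm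
      exact ⟨‖g x‖, norm_pos_iff.2 (hg0 x hx), fun y hy => hm hy⟩
  obtain ⟨g1, hg1⟩ := ContinuousMap.exists_restrict_eq hC.isClosed
    (⟨C.domRestrict g, hg.domRestrict⟩ : C(C, Fin m → ℂ))
  have hg1' : ∀ z ∈ C, g1 z = g z := fun z hz => congrArg (fun h : C(C, Fin m → ℂ) => h ⟨z, hz⟩) hg1
  obtain ⟨f1, hf1, hfa, -⟩ := g1.continuous.exists_contDiff_approx 1
    (continuous_const (y := η)) (fun _ => hη)
  let f : (Fin m → ℂ) → (Fin m → ℂ) := fun z i => if i = i0 then 0 else f1 z i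
  have hf : ContDiff ℝ 1 f := by
    rw [contDiff_pi]
    intro i
    by_cases h : i = i0
    · simp only [f, h, if_true]; exact contDiff_const
    · simp only [f, h, if_false]; exact contDiff_pi.1 hf1 i
  have hfg : ∀ z ∈ C, ‖f z - g z‖ < η := by
    intro z hz
    rw [pi_norm_lt_iff hη]
    intro i
    by_cases h : i = i0
    · simp [f, h, hgi z hz, hη]
    · have := hfa z
      rw [dist_eq_norm, hg1' z hz] at this
      simpa [f, h] using (norm_le_pi_norm (f1 z - g z) i).trans_lt this
  let τ : ℕ → (Fin m → ℂ) → (Fin m → ℂ) := fun j z => (ζ ^ j)⁻¹ • f (ζ ^ j • z)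
  refine ⟨fun z => ∑ j ∈ Finset.range p, τ j z, ?_, ?_, ?_, ?_⟩
  · refine ContDiff.sum fun j _ => ?_
    exact (hf.comp (contDiff_id.const_smul (ζ ^ j))).const_smul _
  · intro z
    have h1 : ∀ j, τ j (ζ • z) = ζ • τ (j + 1) z := by
      intro j
      simp only [τ]
      rw [smul_smul, smul_smul, ← pow_succ]
      congr 1
      rw [pow_succ]
      field_simp
    have h2 : τ p z = τ 0 z := by simp [τ, hζ]
    simp only [h1]
    rw [← Finset.smul_sum]
    congr 1
    have h3 := Finset.sum_range_succ (fun j => τ j z) p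
    have h4 := Finset.sum_range_succ' (fun j => τ j z) p
    rw [h3, h2] at h4
    exact (add_right_cancel h4).symm
  · intro z hz h0
    have hz' : ∀ j : ℕ, ζ ^ j • z ∈ C ∧ g (ζ ^ j • z) = ζ ^ j • g z := by
      intro j
      induction j with
      | zero => simpa using hz
      | succ j ih =>
        rw [pow_succ', mul_smul, mul_smul]
        exact ⟨hCrot _ ih.1, by rw [hge _ ih.1, ih.2]⟩
    have hj : ∀ j, ‖τ j z - g z‖ < η := by
      intro j
      have hne : ζ ^ j ≠ 0 := pow_ne_zero _ hζ0
      have : τ j z - g z = (ζ ^ j)⁻¹ • (f (ζ ^ j • z) - g (ζ ^ j • z)) := by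
        simp only [τ]
        rw [(hz' j).2, smul_sub, inv_smul_smul₀ hne]
      rw [this, norm_smul, norm_inv, norm_pow, hζn, one_pow, inv_one, one_mul]
      exact hfg _ (hz' j).1
    have hs : ‖∑ j ∈ Finset.range p, (τ j z - g z)‖ < p * η := by
      refine (norm_sum_le _ _).trans_lt ?_
      calc _ < ∑ j ∈ Finset.range p, η :=
            Finset.sum_lt_sum_of_nonempty (by simpa using hp.ne_zero) fun j _ => hj j
        _ = p * η := by simp
    have h0' : ∑ j ∈ Finset.range p, τ j z = 0 := h0
    rw [Finset.sum_sub_distrib, h0', zero_sub, norm_neg, Finset.sum_const, Finset.card_range,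
      ← Nat.cast_smul_eq_nsmul ℝ, norm_smul, Real.norm_natCast] at hs
    have := hηg z hz
    have hpp : (0:ℝ) < p := by exact_mod_cast hp.pos
    nlinarith
  · intro z
    simp [τ, f, Finset.sum_apply]


end BU

/-- Proposition 2.5 (f): if `S` is the boundary of a bounded open
`e^{2πi/p}`-invariant neighborhood of `0` in `ℂ^m` and `Ψ : S → X` is continuous and
equivariant, then `γ(Ψ(S)) ≥ m`. -/
theorem gammaIdx_ge_of_sphere_map
    {X : Type*} [TopologicalSpace X] [T2Space X] (p : ℕ) (hp : p.Prime)
    (σ : X → X) (hσc : Continuous σ) (hσp : σ^[p] = id)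
    (m : ℕ) (hm : 1 ≤ m)
    (W : Set (Fin m → ℂ)) (hWopen : IsOpen W) (hW0 : (0 : Fin m → ℂ) ∈ W)
    (hWbdd : Bornology.IsBounded W)
    (hWrot : (fun z : Fin m → ℂ => Complex.exp (2 * π * Complex.I / p) • z) '' W = W)
    (Ψ : (Fin m → ℂ) → X) (hΨc : ContinuousOn Ψ (frontier W))
    (hΨeq : ∀ z ∈ frontier W,
      Ψ (Complex.exp (2 * π * Complex.I / p) • z) = σ (Ψ z)) :
    IsCompact (Ψ '' frontier W) ∧ σ '' (Ψ '' frontier W) = Ψ '' frontier W ∧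
    (m : ℕ∞) ≤ gammaIdx p σ (Ψ '' frontier W) := by
  classical
  have hprim := Complex.isPrimitiveRoot_exp p hp.ne_zero
  have hζ := hprim.pow_eq_one
  have hζ1 := hprim.ne_one hp.one_lt
  have hζn := Complex.norm_eq_one_of_pow_eq_one hζ hp.ne_zero
  have hζ0 := hprim.ne_zero hp.ne_zero
  revert hWrot hΨeq
  unfold gammaIdx
  generalize Complex.exp (2 * π * Complex.I / p) = ζ at *
  intro hWrot hΨeq
  have hcpt : IsCompact (frontier W) := hWbdd.isCompact_closure.of_isClosed_subset
    isClosed_frontier frontier_subset_closure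
  have hfr : (fun z : Fin m → ℂ => ζ • z) '' frontier W = frontier W := by
    have := (Homeomorph.smulOfNeZero (α := Fin m → ℂ) ζ hζ0).image_frontier W
    change (fun z : Fin m → ℂ => ζ • z) '' frontier W
      = frontier ((fun z : Fin m → ℂ => ζ • z) '' W) at this
    rw [this, hWrot]
  have hrot : ∀ z ∈ frontier W, ζ • z ∈ frontier W := fun z hz => by
    rw [← hfr]; exact ⟨z, hz, rfl⟩
  have hWrot' : ∀ z ∈ W, ζ • z ∈ W := fun z hz => by
    rw [← hWrot]; exact ⟨z, hz, rfl⟩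
  refine ⟨hcpt.image_of_continuousOn hΨc, ?_, ?_⟩
  · ext x
    constructor
    · rintro ⟨_, ⟨z, hz, rfl⟩, rfl⟩
      exact ⟨ζ • z, hrot z hz, hΨeq z hz⟩
    · rintro ⟨z, hz, rfl⟩
      rw [← hfr] at hz
      obtain ⟨w, hw, rfl⟩ := hz
      exact ⟨Ψ w, ⟨w, hw, rfl⟩, (hΨeq w hw).symm⟩
  · apply le_sInf
    rintro _ ⟨k, ⟨h, hc, hne, heq⟩, rfl⟩
    by_contra hlt
    have hkm : k < m := by
      have : (k : ℕ∞) < (m : ℕ∞) := not_le.1 hlt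
      exact_mod_cast this
    obtain ⟨F, hF, hFe, hF0, hFi⟩ := bu_smooth m p hp ζ hζ hζn (frontier W) hcpt hrot
      (fun z i => if hi : i.val < k then h (Ψ z) ⟨i.val, hi⟩ else 0)
      (by
        refine continuousOn_pi.2 fun i => ?_
        by_cases hi : i.val < k
        · simp only [hi, dif_pos]
          exact (continuousOn_pi.1 hc ⟨i.val, hi⟩).comp hΨc fun z hz => ⟨z, hz, rfl⟩
        · simp only [hi]
          exact continuousOn_const)
      (by
        intro z hz
        funext i
        by_cases hi : i.val < k
        · simp [hi, hΨeq z hz, heq (Ψ z) ⟨z, hz, rfl⟩]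
        · simp [hi])
      (by
        intro z hz h0
        apply hne (Ψ z) ⟨z, hz, rfl⟩
        funext j
        have := congrFun h0 ⟨j.val, j.isLt.trans hkm⟩
        simpa using this)
      ⟨k, hkm⟩
      (by intro z hz; simp)
    exact bu_main m p hp ζ hζ hζ1 W hWopen hW0 hWbdd hWrot' F hF hFe hF0 ⟨k, hkm⟩ hFi

end
end
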